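/- Let G be a tree (a connected acyclic simple graph) with vertex set V and graph metric d, let v ∈ V, and let r ≥ 1, 1 ≤ d₀ ≤ r, and k be integers with either k ≥ 2, or k = 1 and 2·d₀ ≥ r. On the annulus B_k = {x ∈ V : (k−1)·r + d₀ ≤ d(v,x) ≤ k·r + d₀}, define x ∼ y if and only if the median m of the triple x, y, v satisfies 2·d(v,m) ≥ (2k−3)·r + 2·d₀. Then ∼ is an equivalence relation on B_k, every equivalence class of ∼ has diameter ≤ 3r, and any two distinct equivalence classes of ∼ are at distance ≥ r from each other. -/

import Mathlib

/-- `m` is the median (center of the tripod) of the vertices `x`, `y`, `v` in the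
graph `G`, with respect to the graph metric. -/
def IsTreeMedian {V : Type*} (G : SimpleGraph V) (x y v m : V) : Prop :=
  G.dist x y = G.dist x m + G.dist m y ∧
  G.dist x v = G.dist x m + G.dist m v ∧
  G.dist y v = G.dist y m + G.dist m v

/-!
In a tree, the distance from `v` to the median of `x`, `y`, `v` is the Gromov product of `x` and
`y` based at `v`, so `x ∼ y` says that this product is at least a threshold. The medians of
`x`, `y`, `v` and of `y`, `z`, `v` both lie on the path from `v` to `y`; going from `x` to `z`
through them gives the ultrametric inequality for the Gromov product, so every such relation is
transitive. Points of an annulus around `v` are almost equidistant from `v`, so for them a lower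
bound on the Gromov product amounts to an upper bound on the distance: this bounds the classes,
and it makes points that are close together equivalent.
-/

open SimpleGraph

section TreeDistance

variable {V : Type*} {G : SimpleGraph V} {u v w x y m n : V}

theorem length_eq_dist_of_isAcyclic (hG : G.IsAcyclic) {p : G.Walk u v} (hp : p.IsPath) :
    p.length = G.dist u v := by
  obtain ⟨q, hq, hq_length⟩ := p.reachable.exists_path_of_dist
  have hpq : p = q := congrArg Subtype.val ((hG.subsingleton_path u v).elim ⟨p, hp⟩ ⟨q, hq⟩)
  rw [hpq, hq_length]

theorem mem_support_iff_dist_add_dist_eq (hG : G.IsTree) {p : G.Walk u v} (hp : p.IsPath) :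
    w ∈ p.support ↔ G.dist u w + G.dist w v = G.dist u v := by
  constructor
  · intro hw
    obtain ⟨q, s, hq, hs, rfl⟩ := hp.mem_support_iff_exists_append.mp hw
    rw [← length_eq_dist_of_isAcyclic hG.isAcyclic hp, Walk.length_append,
      length_eq_dist_of_isAcyclic hG.isAcyclic hq, length_eq_dist_of_isAcyclic hG.isAcyclic hs]
  · intro hdist
    obtain ⟨q, -, hq_length⟩ := hG.connected.exists_path_of_dist u w
    obtain ⟨s, -, hs_length⟩ := hG.connected.exists_path_of_dist w v
    have hqs : (q.append s).IsPath :=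
      Walk.isPath_of_length_eq_dist _ (by rw [Walk.length_append, hq_length, hs_length, hdist])
    have hp_eq : p = q.append s := (hG.existsUnique_path u v).unique hp hqs
    exact p.mem_support_iff_exists_append.mpr ⟨q, s, hp_eq⟩

theorem dist_add_dist_eq_of_forall_dist_le (hG : G.IsTree) {p : G.Walk m v} (hp : p.IsPath)
    (hmin : ∀ w ∈ p.support, G.dist y m ≤ G.dist y w) :
    G.dist y m + G.dist m v = G.dist y v := by
  obtain ⟨q, hq, -⟩ := hG.connected.exists_path_of_dist y m
  have eq_of_mem : ∀ w ∈ q.support, w ∈ p.support → w = m := by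
    intro w hwq hwp
    have hdist := (mem_support_iff_dist_add_dist_eq hG hq).mp hwq
    have := hmin w hwp
    exact hG.connected.dist_eq_zero_iff.mp (by lia)
  have hqp : (q.append p).IsPath := by
    have hp_nodup : (m :: p.support.tail).Nodup := p.cons_tail_support ▸ hp.support_nodup
    rw [Walk.isPath_def, Walk.support_append]
    refine hq.support_nodup.append hp_nodup.of_cons fun w hwq hwp => ?_
    exact hp_nodup.notMem (eq_of_mem w hwq (List.mem_of_mem_tail hwp) ▸ hwp)
  rw [← length_eq_dist_of_isAcyclic hG.isAcyclic hqp, Walk.length_append,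
    length_eq_dist_of_isAcyclic hG.isAcyclic hq, length_eq_dist_of_isAcyclic hG.isAcyclic hp]

theorem dist_add_dist_eq_of_dist_le (hG : G.IsTree)
    (hm : G.dist v m + G.dist m y = G.dist v y) (hn : G.dist v n + G.dist n y = G.dist v y)
    (hle : G.dist v m ≤ G.dist v n) : G.dist v m + G.dist m n = G.dist v n := by
  obtain ⟨p, hp, -⟩ := hG.connected.exists_path_of_dist v y
  obtain ⟨q, s, hq, hs, rfl⟩ :=
    hp.mem_support_iff_exists_append.mp ((mem_support_iff_dist_add_dist_eq hG hp).mpr hm)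
  have hn_mem := (mem_support_iff_dist_add_dist_eq hG hp).mpr hn
  rcases (Walk.mem_support_append_iff q s).mp hn_mem with hnq | hns
  · have hnq_dist := (mem_support_iff_dist_add_dist_eq hG hq).mp hnq
    rw [G.dist_comm (u := n)] at hnq_dist
    lia
  · have hns_dist := (mem_support_iff_dist_add_dist_eq hG hs).mp hns
    lia

end TreeDistance

/-- Twice the Gromov product `(x | y)_v` of `x` and `y` based at `v`, in the graph metric. Doubling
it keeps it an integer, and it is taken in `ℤ` to avoid truncated subtraction. -/
noncomputable def twiceGromovProduct {V : Type*} (G : SimpleGraph V) (v x y : V) : ℤ :=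
  G.dist v x + G.dist v y - G.dist x y

section GromovProduct

variable {V : Type*} {G : SimpleGraph V} {v x y z m n : V}

theorem twiceGromovProduct_self : twiceGromovProduct G v x x = 2 * G.dist v x := by
  rw [twiceGromovProduct, dist_self]
  ring

theorem twiceGromovProduct_comm : twiceGromovProduct G v x y = twiceGromovProduct G v y x := by
  rw [twiceGromovProduct, twiceGromovProduct, G.dist_comm (u := x)]
  ring

namespace IsTreeMedian

theorem symm (h : IsTreeMedian G x y v m) : IsTreeMedian G y x v m := by
  obtain ⟨hxy, hxv, hyv⟩ := h
  refine ⟨?_, hyv, hxv⟩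
  rw [G.dist_comm, hxy, G.dist_comm (u := x), G.dist_comm (u := m) (v := y), add_comm]

theorem dist_add_dist_left (h : IsTreeMedian G x y v m) :
    G.dist v m + G.dist m x = G.dist v x := by
  rw [G.dist_comm (u := v) (v := x), h.2.1, G.dist_comm (u := v), G.dist_comm (u := m) (v := x),
    add_comm]

theorem twiceGromovProduct_eq (h : IsTreeMedian G x y v m) :
    twiceGromovProduct G v x y = 2 * G.dist v m := by
  have hx := h.dist_add_dist_left
  have hy := h.symm.dist_add_dist_left
  have hxy := h.1
  rw [G.dist_comm (u := x) (v := m)] at hxy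
  rw [twiceGromovProduct]
  lia

theorem two_mul_dist_le_twiceGromovProduct (hG : G.IsTree) (hm : IsTreeMedian G x y v m)
    (hn : IsTreeMedian G y z v n) (hle : G.dist v m ≤ G.dist v n) :
    2 * (G.dist v m : ℤ) ≤ twiceGromovProduct G v x z := by
  have hmn : G.dist v m + G.dist m n = G.dist v n :=
    dist_add_dist_eq_of_dist_le hG hm.symm.dist_add_dist_left hn.dist_add_dist_left hle
  have hxz : G.dist x z ≤ G.dist m x + G.dist m n + G.dist n z :=
    calc G.dist x z ≤ G.dist x m + G.dist m z := hG.connected.dist_triangle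
      _ ≤ G.dist x m + (G.dist m n + G.dist n z) := by gcongr; exact hG.connected.dist_triangle
      _ = G.dist m x + G.dist m n + G.dist n z := by rw [G.dist_comm (u := x), add_assoc]
  have hx := hm.dist_add_dist_left
  have hz := hn.symm.dist_add_dist_left
  rw [twiceGromovProduct]
  lia

end IsTreeMedian

theorem exists_isTreeMedian (hG : G.IsTree) (x y v : V) : ∃ m, IsTreeMedian G x y v m := by
  obtain ⟨p, hp, -⟩ := hG.connected.exists_path_of_dist x v
  obtain ⟨m, hm, hmin⟩ := Set.exists_min_image {w | w ∈ p.support} (G.dist y)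
    p.support.finite_toSet ⟨x, p.start_mem_support⟩
  have hxv := (mem_support_iff_dist_add_dist_eq hG hp).mp hm
  obtain ⟨q, s, hq, hs, rfl⟩ := hp.mem_support_iff_exists_append.mp hm
  have hyx : G.dist y m + G.dist m x = G.dist y x :=
    dist_add_dist_eq_of_forall_dist_le hG hq.reverse fun w hw =>
      hmin w (q.support_subset_support_append_left s (by simpa using hw))
  have hyv : G.dist y m + G.dist m v = G.dist y v :=
    dist_add_dist_eq_of_forall_dist_le hG hs fun w hw =>
      hmin w (q.support_subset_support_append_right s hw)
  refine ⟨m, ?_, hxv.symm, hyv.symm⟩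
  rw [G.dist_comm, ← hyx, G.dist_comm (u := y), G.dist_comm (u := m) (v := x), add_comm]

theorem exists_isTreeMedian_le_two_mul_dist_iff (hG : G.IsTree) {t : ℤ} :
    (∃ m, IsTreeMedian G x y v m ∧ t ≤ 2 * (G.dist v m : ℤ)) ↔ t ≤ twiceGromovProduct G v x y := by
  constructor
  · rintro ⟨m, hm, ht⟩
    rwa [hm.twiceGromovProduct_eq]
  · intro ht
    obtain ⟨m, hm⟩ := exists_isTreeMedian hG x y v
    exact ⟨m, hm, hm.twiceGromovProduct_eq ▸ ht⟩

theorem min_twiceGromovProduct_le (hG : G.IsTree) :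
    min (twiceGromovProduct G v x y) (twiceGromovProduct G v y z) ≤ twiceGromovProduct G v x z := by
  obtain ⟨m, hm⟩ := exists_isTreeMedian hG x y v
  obtain ⟨n, hn⟩ := exists_isTreeMedian hG y z v
  rcases le_total (G.dist v m) (G.dist v n) with hle | hle
  · refine (min_le_left _ _).trans ?_
    rw [hm.twiceGromovProduct_eq]
    exact hm.two_mul_dist_le_twiceGromovProduct hG hn hle
  · refine (min_le_right _ _).trans ?_
    rw [hn.twiceGromovProduct_eq, twiceGromovProduct_comm]
    exact hn.symm.two_mul_dist_le_twiceGromovProduct hG hm.symm hle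

end GromovProduct

theorem stmt_4_general {V : Type*} {G : SimpleGraph V} (hG : G.IsTree) (v : V) {a b t : ℤ}
    (hta : t ≤ 2 * a) :
    let B : Set V := {x | a ≤ (G.dist v x : ℤ) ∧ (G.dist v x : ℤ) ≤ b}
    let rel : V → V → Prop := fun x y =>
      ∃ m : V, IsTreeMedian G x y v m ∧ t ≤ 2 * (G.dist v m : ℤ)
    let cls : V → Set V := fun x => {y ∈ B | rel x y}
    (∀ x ∈ B, rel x x) ∧
    (∀ x ∈ B, ∀ y ∈ B, rel x y → rel y x) ∧
    (∀ x ∈ B, ∀ y ∈ B, ∀ z ∈ B, rel x y → rel y z → rel x z) ∧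
    (∀ x ∈ B, ∀ y ∈ cls x, ∀ z ∈ cls x, (G.dist y z : ℤ) ≤ 2 * b - t) ∧
    (∀ x ∈ B, ∀ x' ∈ B, cls x ≠ cls x' →
      ∀ y ∈ cls x, ∀ z ∈ cls x', 2 * a - t < G.dist y z) := by
  intro B rel cls
  have hrel {x y : V} : rel x y ↔ t ≤ twiceGromovProduct G v x y :=
    exists_isTreeMedian_le_two_mul_dist_iff hG
  have hsymm {x y : V} (h : rel x y) : rel y x := by
    rwa [hrel, twiceGromovProduct_comm, ← hrel]
  have htrans {x y z : V} (hxy : rel x y) (hyz : rel y z) : rel x z :=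
    hrel.mpr ((le_min (hrel.mp hxy) (hrel.mp hyz)).trans (min_twiceGromovProduct_le hG))
  refine ⟨fun x hx => hrel.mpr ?_, fun _ _ _ _ => hsymm, fun _ _ _ _ _ _ => htrans, ?_, ?_⟩
  · rw [twiceGromovProduct_self]
    linarith [hx.1]
  · rintro x - y ⟨⟨-, hy⟩, hxy⟩ z ⟨⟨-, hz⟩, hxz⟩
    have hyz : t ≤ G.dist v y + G.dist v z - G.dist y z := hrel.mp (htrans (hsymm hxy) hxz)
    linarith
  · rintro x - x' - hne y ⟨⟨hy, -⟩, hxy⟩ z ⟨⟨hz, -⟩, hxz⟩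
    contrapose! hne
    have hyz : rel y z := hrel.mpr (by rw [twiceGromovProduct]; linarith)
    have hxx' : rel x x' := htrans hxy (htrans hyz (hsymm hxz))
    exact Set.ext fun w => and_congr_right fun _ => ⟨htrans (hsymm hxx'), htrans hxx'⟩

/-- On the annulus `B_k = {x : (k−1)·r + d₀ ≤ d(v,x) ≤ k·r + d₀}` of a tree, with
either `k ≥ 2`, or `k = 1` and `2·d₀ ≥ r`, the relation `x ∼ y` iff the median `m` of
`x, y, v` satisfies `2·d(v,m) ≥ (2k−3)·r + 2·d₀` is an equivalence relation whose
classes have diameter ≤ 3r, with distinct classes at distance ≥ r. -/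
theorem stmt_4 {V : Type*} (G : SimpleGraph V) (hG : G.IsTree) (v : V)
    (r d₀ k : ℕ) (hr : 1 ≤ r) (hd₁ : 1 ≤ d₀) (hd₂ : d₀ ≤ r)
    (hk : 2 ≤ k ∨ (k = 1 ∧ r ≤ 2 * d₀)) :
    let B : Set V := {x | ((k : ℤ) - 1) * r + d₀ ≤ (G.dist v x : ℤ) ∧
      (G.dist v x : ℤ) ≤ k * r + d₀}
    let rel : V → V → Prop := fun x y =>
      ∃ m : V, IsTreeMedian G x y v m ∧
        (2 * (k : ℤ) - 3) * r + 2 * d₀ ≤ 2 * (G.dist v m : ℤ)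
    let cls : V → Set V := fun x => {y ∈ B | rel x y}
    -- ∼ is an equivalence relation on B_k
    (∀ x ∈ B, rel x x) ∧
    (∀ x ∈ B, ∀ y ∈ B, rel x y → rel y x) ∧
    (∀ x ∈ B, ∀ y ∈ B, ∀ z ∈ B, rel x y → rel y z → rel x z) ∧
    -- every equivalence class has diameter ≤ 3r
    (∀ x ∈ B, ∀ y ∈ cls x, ∀ z ∈ cls x, G.dist y z ≤ 3 * r) ∧
    -- distinct equivalence classes are at distance ≥ r
    (∀ x ∈ B, ∀ x' ∈ B, cls x ≠ cls x' →
      ∀ y ∈ cls x, ∀ z ∈ cls x', r ≤ G.dist y z) := by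
  obtain ⟨hrefl, hsymm, htrans, hdiam, hsep⟩ := stmt_4_general hG v (a := (k - 1) * r + d₀)
    (b := k * r + d₀) (t := (2 * k - 3) * r + 2 * d₀) (by linarith)
  exact ⟨hrefl, hsymm, htrans, fun x hx y hy z hz => by zify; linarith [hdiam x hx y hy z hz],
    fun x hx x' hx' hne y hy z hz => by zify; linarith [hsep x hx x' hx' hne y hy z hz]⟩
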